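/- arXiv:2008.06906 — 2 statements merged into one kernel-verified Lean document; each statement's English description precedes it below -/
import Mathlib

section
/- Let G : ℝⁿ × ℝⁿ → ℝⁿ be a C¹ map whose components are positively 2-homogeneous in the second variable, and let S be the associated spray S(x,y) = (y, −2G(x,y)). Suppose ω : ℝⁿ × ℝⁿ → (alternating bilinear forms on ℝⁿ × ℝⁿ) is any map and H : ℝⁿ × ℝⁿ → ℝ is differentiable such that for every point u and every i = 1,…,n, dH_u(δ/δx_i(u)) = ω_u(S(u), δ/δx_i(u)). Then dH_u(S(u)) = 0 for every u; i.e. H is a constant of motion for S. -/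
/-- The semi-spray `S(x,y) = (y, -2 G(x,y))` associated to coefficient
functions `G : ℝⁿ × ℝⁿ → ℝⁿ`. -/
noncomputable def spray (n : ℕ) (G : (Fin n → ℝ) × (Fin n → ℝ) → Fin n → ℝ) :
    (Fin n → ℝ) × (Fin n → ℝ) → (Fin n → ℝ) × (Fin n → ℝ) :=
  fun u => (u.2, fun a => -2 * G u a)

/-- The horizontal vector field `δ/δx_i(x,y) = (e_i, -(∂G¹/∂y_i, …, ∂Gⁿ/∂y_i))`
associated to the semi-spray with coefficients `G`. -/
noncomputable def horiz (n : ℕ) (G : (Fin n → ℝ) × (Fin n → ℝ) → Fin n → ℝ)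
    (i : Fin n) : (Fin n → ℝ) × (Fin n → ℝ) → (Fin n → ℝ) × (Fin n → ℝ) :=
  fun u => (Pi.single i 1, fun a => -(fderiv ℝ G u (0, Pi.single i 1) a))


/-!
By Euler's identity `dG_(x,y)(0, y) = 2 G(x, y)`, the spray `S(x, y) = (y, -2 G(x, y))` is the
horizontal lift of `y`, hence a linear combination of the fields `δ/δx_i`. By linearity
`dH(S) = ω(S, S)`, which vanishes because `ω` is alternating.
-/

theorem linearMap_apply_eq_zero_of_mem_span_of_eq_alternatingMap {R M N : Type*} [CommSemiring R]
    [AddCommMonoid M] [AddCommMonoid N] [Module R M] [Module R N] (ω : M [⋀^Fin 2]→ₗ[R] N)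
    (α : M →ₗ[R] N) {s : Set M} {v : M} (hv : v ∈ Submodule.span R s)
    (hα : ∀ w ∈ s, α w = ω ![v, w]) : α v = 0 := by
  let contraction : M →ₗ[R] N := (AlternatingMap.ofSubsingleton R M N 0).symm (ω.curryLeft v)
  have contraction_apply (w : M) : contraction w = ω ![v, w] := by
    simp [contraction, Matrix.vec_single_eq_const]
  calc
    α v = contraction v :=
      LinearMap.eqOn_span (fun w hw => (hα w hw).trans (contraction_apply w).symm) hv
    _ = ω ![v, v] := contraction_apply v
    _ = 0 := ω.map_eq_zero_of_eq ![v, v] (i := 0) (j := 1) rfl zero_ne_one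

section Euler

variable {E F : Type*} [NormedAddCommGroup E] [NormedSpace ℝ E]
  [NormedAddCommGroup F] [NormedSpace ℝ F]

theorem hasFDerivAt_apply_self_of_posHomogeneous {f : E → F} {f' : E →L[ℝ] F} {x : E} {p : ℝ}
    (hf : HasFDerivAt f f' x) (hhom : ∀ l : ℝ, 0 < l → f (l • x) = l ^ p • f x) :
    f' x = p • f x := by
  have deriv_along_ray : HasDerivAt (fun l : ℝ => f (l • x)) (f' x) 1 := by
    have ray : HasDerivAt (fun l : ℝ => l • x) x 1 := by
      simpa using (hasDerivAt_id (1 : ℝ)).smul_const x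
    exact hf.comp_hasDerivAt_of_eq 1 ray (one_smul ℝ x).symm
  have deriv_rpow : HasDerivAt (fun l : ℝ => l ^ p • f x) (p • f x) 1 := by
    simpa using (Real.hasDerivAt_rpow_const (p := p) (.inl one_ne_zero)).smul_const (f x)
  refine deriv_along_ray.unique (deriv_rpow.congr_of_eventuallyEq ?_)
  filter_upwards [lt_mem_nhds one_pos] with l hl using hhom l hl

end Euler

section Semispray

variable {E : Type*} [NormedAddCommGroup E] [NormedSpace ℝ E]

/-- The semi-spray `S(x, y) = (y, -2 G(x, y))` on `E × E`, for an arbitrary real normed space `E`;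
it is the coordinate-free form of `spray`. -/
def semispray (G : E × E → E) (u : E × E) : E × E :=
  (u.2, (-2 : ℝ) • G u)

/-- The horizontal lift `v ↦ (v, -dG_u(0, v))` at `u` of the nonlinear connection defined by the
semi-spray with coefficients `G`; the lifts of the standard basis vectors are the fields `horiz`. -/
noncomputable def horizontalLift (G : E × E → E) (u : E × E) : E →L[ℝ] E × E :=
  (ContinuousLinearMap.id ℝ E).prod (-(fderiv ℝ G u ∘L ContinuousLinearMap.inr ℝ E E))

theorem semispray_eq_horizontalLift {G : E × E → E} {u : E × E} (hG : DifferentiableAt ℝ G u)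
    (hhom : ∀ l : ℝ, 0 < l → G (u.1, l • u.2) = l ^ 2 • G u) :
    semispray G u = horizontalLift G u u.2 := by
  have euler : fderiv ℝ G u (0, u.2) = (2 : ℝ) • G u :=
    hasFDerivAt_apply_self_of_posHomogeneous
      (hG.hasFDerivAt.comp u.2 (hasFDerivAt_prodMk_right u.1 u.2))
      fun l hl => by simpa using hhom l hl
  simp [semispray, horizontalLift, euler]

theorem spray_constant_of_motion_general {W ι : Type*} [AddCommMonoid W] [Module ℝ W]
    {G : E × E → E} {u : E × E} (hG : DifferentiableAt ℝ G u)
    (hhom : ∀ l : ℝ, 0 < l → G (u.1, l • u.2) = l ^ 2 • G u)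
    {b : ι → E} (hb : Submodule.span ℝ (Set.range b) = ⊤)
    (ω : (E × E) [⋀^Fin 2]→ₗ[ℝ] W) (α : E × E →ₗ[ℝ] W)
    (hα : ∀ i, α (horizontalLift G u (b i)) = ω ![semispray G u, horizontalLift G u (b i)]) :
    α (semispray G u) = 0 := by
  have semispray_mem_span :
      semispray G u ∈ Submodule.span ℝ (horizontalLift G u '' Set.range b) := by
    rw [semispray_eq_horizontalLift hG hhom]
    exact Submodule.apply_mem_span_image_of_mem_span (horizontalLift G u).toLinearMap
      (hb ▸ Submodule.mem_top)
  refine linearMap_apply_eq_zero_of_mem_span_of_eq_alternatingMap ω α semispray_mem_span ?_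
  rintro _ ⟨_, ⟨i, rfl⟩, rfl⟩
  exact hα i

end Semispray

theorem spray_eq_semispray (n : ℕ) (G : (Fin n → ℝ) × (Fin n → ℝ) → Fin n → ℝ) :
    spray n G = semispray G :=
  rfl

theorem horiz_eq_horizontalLift (n : ℕ) (G : (Fin n → ℝ) × (Fin n → ℝ) → Fin n → ℝ) (i : Fin n)
    (u : (Fin n → ℝ) × (Fin n → ℝ)) :
    horiz n G i u = horizontalLift G u (Pi.basisFun ℝ (Fin n) i) := by
  rw [Pi.basisFun_apply]
  rfl

/-- if `G` is `C¹` and positively `2`-homogeneous in `y` (so that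
`S` is a spray), `ω` is any field of alternating bilinear forms, and `H` is
differentiable with `dH_u(δ/δx_i(u)) = ω_u(S(u), δ/δx_i(u))` for all `u, i`,
then `dH_u(S(u)) = 0` for all `u`, i.e. `H` is a constant of motion for `S`. -/
theorem spray_constant_of_motion
    (n : ℕ) (G : (Fin n → ℝ) × (Fin n → ℝ) → Fin n → ℝ)
    (hG : ContDiff ℝ 1 G)
    (hhom : ∀ (x y : Fin n → ℝ) (l : ℝ), 0 < l → G (x, l • y) = l ^ 2 • G (x, y))
    (ω : (Fin n → ℝ) × (Fin n → ℝ) →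
      ((Fin n → ℝ) × (Fin n → ℝ)) [⋀^Fin 2]→ₗ[ℝ] ℝ)
    (H : (Fin n → ℝ) × (Fin n → ℝ) → ℝ) (hH : Differentiable ℝ H)
    (hmain : ∀ u, ∀ i : Fin n,
      fderiv ℝ H u (horiz n G i u) = ω u ![spray n G u, horiz n G i u]) :
    ∀ u, fderiv ℝ H u (spray n G u) = 0 := by
  simp only [horiz_eq_horizontalLift, spray_eq_semispray] at hmain ⊢
  exact fun u => spray_constant_of_motion_general (hG.differentiable one_ne_zero u) (hhom u.1 u.2)
    (Pi.basisFun ℝ (Fin n)).span_eq (ω u) (fderiv ℝ H u) (hmain u)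
end

section
/- Let G : ℝⁿ × ℝⁿ → ℝⁿ be a C¹ map whose components are positively 2-homogeneous in the second variable, and let S(x,y) = (y, −2G(x,y)) be the associated spray. Let A : ℝⁿ × ℝⁿ → (skew-symmetric (2n)×(2n) real matrices) and f = (f₁,…,fₙ) : ℝⁿ × ℝⁿ → ℝⁿ be any maps, and suppose H : ℝⁿ × ℝⁿ → ℝ is differentiable with dH_u(v) = ⟨A(u)·S(u), v⟩ + Σ_{a=1}^n f_a(u)·(v_{n+a} + Σ_{i=1}^n ∂G^a/∂y_i(u)·v_i) for every u and every v = (v₁,…,v_{2n}) ∈ ℝ²ⁿ, where ⟨·,·⟩ is the Euclidean inner product on ℝ²ⁿ. Then dH_u(S(u)) = 0 for every u, i.e. H is a constant of motion for S. -/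
open scoped Matrix

/-- Identification of `ℝⁿ × ℝⁿ` with `ℝ²ⁿ`: the first `n` coordinates are the
base coordinates, the last `n` ones the fibre coordinates. -/
noncomputable def toR2n (n : ℕ) (u : (Fin n → ℝ) × (Fin n → ℝ)) :
    Fin (n + n) → ℝ :=
  Fin.append u.1 u.2

/-!
The skew-symmetric part `⟨A S, ·⟩` vanishes on `S` itself. Euler's identity
`∑ᵢ ∂Gᵃ/∂yᵢ yᵢ = 2 Gᵃ` says that each of the forms `dyᵃ + ∑ᵢ ∂Gᵃ/∂yᵢ dxᵢ` takes the value
`-2 Gᵃ + 2 Gᵃ = 0` on `S`.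
-/

theorem mulVec_dotProduct_self_eq_zero_of_transpose_eq_neg {ι R : Type*} [Fintype ι]
    [NonUnitalCommRing R] [IsAddTorsionFree R] {A : Matrix ι ι R} (hA : Aᵀ = -A) (w : ι → R) :
    (A *ᵥ w) ⬝ᵥ w = 0 := by
  refine self_eq_neg.mp ?_
  calc (A *ᵥ w) ⬝ᵥ w = w ⬝ᵥ (A *ᵥ w) := dotProduct_comm _ _
    _ = w ⬝ᵥ (Aᵀ *ᵥ w) := (Matrix.dotProduct_transpose_mulVec A w w).symm
    _ = (-(A *ᵥ w)) ⬝ᵥ w := by rw [hA, Matrix.neg_mulVec, dotProduct_comm]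
    _ = -((A *ᵥ w) ⬝ᵥ w) := neg_dotProduct _ _

theorem map_zero_prodMk_eq_sum_smul_single {ι R M N : Type*} [Fintype ι] [DecidableEq ι]
    [Semiring R] [AddCommMonoid M] [Module R M] [AddCommMonoid N] [Module R N]
    (L : M × (ι → R) →ₗ[R] N) (y : ι → R) :
    L (0, y) = ∑ i, y i • L (0, Pi.single i 1) := by
  calc L (0, y) = (L ∘ₗ LinearMap.inr R M (ι → R)) (∑ i, y i • Pi.single i 1) := by
        rw [← pi_eq_sum_univ' y]; rfl
    _ = ∑ i, y i • L (0, Pi.single i 1) := by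
        simp only [map_sum, map_smul, LinearMap.comp_apply, LinearMap.inr_apply]

section Euler

variable {E F : Type*} [NormedAddCommGroup E] [NormedSpace ℝ E]
  [NormedAddCommGroup F] [NormedSpace ℝ F]

theorem hasFDerivAt_apply_self_of_homogeneous {g : E → F} {g' : E →L[ℝ] F} {y : E} {p : ℝ}
    (hg : HasFDerivAt g g' y) (hhom : ∀ l : ℝ, 0 < l → g (l • y) = l ^ p • g y) :
    g' y = p • g y := by
  have hray : HasDerivAt (fun l : ℝ => l • y) y 1 := by
    simpa using (hasDerivAt_id (1 : ℝ)).smul_const y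
  have hcomp : HasDerivAt (fun l : ℝ => g (l • y)) (g' y) 1 :=
    HasFDerivAt.comp_hasDerivAt (1 : ℝ) (by simpa using hg) hray
  have hpow : HasDerivAt (fun l : ℝ => l ^ p • g y) (p • g y) 1 := by
    simpa using (Real.hasDerivAt_rpow_const (p := p) (Or.inl one_ne_zero)).smul_const (g y)
  refine hcomp.unique (hpow.congr_of_eventuallyEq ?_)
  filter_upwards [lt_mem_nhds one_pos] with l hl using hhom l hl

theorem sum_smul_fderiv_single_of_homogeneous_snd {ι : Type*} [Fintype ι] [DecidableEq ι]
    {G : E × (ι → ℝ) → F} {u : E × (ι → ℝ)} {p : ℝ} (hG : DifferentiableAt ℝ G u)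
    (hhom : ∀ l : ℝ, 0 < l → G (u.1, l • u.2) = l ^ p • G u) :
    ∑ i, u.2 i • fderiv ℝ G u (0, Pi.single i 1) = p • G u := by
  have hfibre : HasFDerivAt (fun y => G (u.1, y))
      (fderiv ℝ G u ∘L ContinuousLinearMap.inr ℝ E (ι → ℝ)) u.2 :=
    hG.hasFDerivAt.comp u.2 (hasFDerivAt_prodMk_right u.1 u.2)
  calc ∑ i, u.2 i • fderiv ℝ G u (0, Pi.single i 1) = fderiv ℝ G u (0, u.2) :=
        (map_zero_prodMk_eq_sum_smul_single (fderiv ℝ G u).toLinearMap u.2).symm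
    _ = p • G u := hasFDerivAt_apply_self_of_homogeneous hfibre hhom

end Euler

theorem spray_snd_add_sum_fderiv_mul_spray_fst_eq_zero {n : ℕ}
    {G : (Fin n → ℝ) × (Fin n → ℝ) → Fin n → ℝ} {u : (Fin n → ℝ) × (Fin n → ℝ)}
    (hG : DifferentiableAt ℝ G u)
    (hhom : ∀ l : ℝ, 0 < l → G (u.1, l • u.2) = l ^ 2 • G u) (a : Fin n) :
    (spray n G u).2 a + ∑ i, fderiv ℝ G u (0, Pi.single i 1) a * (spray n G u).1 i = 0 := by
  have heuler : ∑ i, u.2 i • fderiv ℝ G u (0, Pi.single i 1) = (2 : ℝ) • G u :=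
    sum_smul_fderiv_single_of_homogeneous_snd hG fun l hl => by rw [hhom l hl, Real.rpow_two]
  have heuler_a : ∑ i, fderiv ℝ G u (0, Pi.single i 1) a * u.2 i = 2 * G u a := by
    simpa [mul_comm] using congrFun heuler a
  simp only [spray, heuler_a]
  ring

theorem spray_constant_of_motion_coords_general {n : ℕ}
    {G : (Fin n → ℝ) × (Fin n → ℝ) → Fin n → ℝ} {u : (Fin n → ℝ) × (Fin n → ℝ)}
    (hG : DifferentiableAt ℝ G u)
    (hhom : ∀ l : ℝ, 0 < l → G (u.1, l • u.2) = l ^ 2 • G u)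
    {A : Matrix (Fin (n + n)) (Fin (n + n)) ℝ} (hA : Aᵀ = -A) (f : Fin n → ℝ)
    {H : (Fin n → ℝ) × (Fin n → ℝ) → ℝ} {H' : (Fin n → ℝ) × (Fin n → ℝ) →L[ℝ] ℝ}
    (hH : HasFDerivAt H H' u)
    (hH' : ∀ v : (Fin n → ℝ) × (Fin n → ℝ),
      H' v = (A *ᵥ toR2n n (spray n G u)) ⬝ᵥ toR2n n v +
        ∑ a, f a * (v.2 a + ∑ i, fderiv ℝ G u (0, Pi.single i 1) a * v.1 i)) :
    fderiv ℝ H u (spray n G u) = 0 := by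
  rw [hH.fderiv, hH', mulVec_dotProduct_self_eq_zero_of_transpose_eq_neg hA, zero_add]
  refine Finset.sum_eq_zero fun a _ => ?_
  rw [spray_snd_add_sum_fderiv_mul_spray_fst_eq_zero hG hhom, mul_zero]

/-- if `G` is `C¹` and positively `2`-homogeneous in `y`,
`A` is a field of skew-symmetric `2n × 2n` matrices, `f = (f₁,…,fₙ)` arbitrary,
and `H` is differentiable with
`dH_u(v) = ⟨A(u)·S(u), v⟩ + Σ_a f_a(u)·(v_{n+a} + Σ_i ∂Gᵃ/∂y_i(u)·v_i)`
for all `u, v`, then `dH_u(S(u)) = 0` for all `u`. -/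
theorem spray_constant_of_motion_coords
    (n : ℕ) (G : (Fin n → ℝ) × (Fin n → ℝ) → Fin n → ℝ)
    (hG : ContDiff ℝ 1 G)
    (hhom : ∀ (x y : Fin n → ℝ) (l : ℝ), 0 < l → G (x, l • y) = l ^ 2 • G (x, y))
    (A : (Fin n → ℝ) × (Fin n → ℝ) → Matrix (Fin (n + n)) (Fin (n + n)) ℝ)
    (hA : ∀ u, (A u)ᵀ = -(A u))
    (f : (Fin n → ℝ) × (Fin n → ℝ) → Fin n → ℝ)
    (H : (Fin n → ℝ) × (Fin n → ℝ) → ℝ) (hH : Differentiable ℝ H)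
    (hmain : ∀ u, ∀ v : (Fin n → ℝ) × (Fin n → ℝ),
      fderiv ℝ H u v =
        (A u *ᵥ toR2n n (spray n G u)) ⬝ᵥ toR2n n v +
        ∑ a : Fin n, f u a *
          (v.2 a + ∑ i : Fin n, fderiv ℝ G u (0, Pi.single i 1) a * v.1 i)) :
    ∀ u, fderiv ℝ H u (spray n G u) = 0 :=
  fun u => spray_constant_of_motion_coords_general (hG.differentiable one_ne_zero u)
    (hhom u.1 u.2) (hA u) (f u) (hH u).hasFDerivAt (hmain u)
end
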